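/- Let γ ∈ [0, π/4], let a ∈ {0,1}, and let n = (n₁,n₂,n₃) ∈ ℝ³ be a unit vector. Let p = ⟨ψ^γ| (A⊗1₂) |ψ^γ⟩ be the marginal probability of the projective qubit measurement element A = (1/2)·(1₂ + (−1)^a·(n₁σ₁ + n₂σ₂ + n₃σ₃)) on the state |ψ^γ⟩. Then the concurrence of |ψ^γ⟩ is bounded from above by this marginal: sin(2γ) ≤ √(1 − (1 − 2p)²). -/

import Mathlib

open Matrix
open scoped Kronecker

/-- The two-qubit pure state `|ψ^γ⟩ = cos γ |00⟩ + sin γ |11⟩` as a vector. -/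
noncomputable def schmidtVec (γ : ℝ) : Fin 2 × Fin 2 → ℂ :=
  fun jk =>
    if jk = (0, 0) then (Real.cos γ : ℂ)
    else if jk = (1, 1) then (Real.sin γ : ℂ) else 0

/-- The Pauli matrix σ₁. -/
def pauli1 : Matrix (Fin 2) (Fin 2) ℂ := !![0, 1; 1, 0]

/-- The Pauli matrix σ₂. -/
def pauli2 : Matrix (Fin 2) (Fin 2) ℂ := !![0, -Complex.I; Complex.I, 0]

/-- The Pauli matrix σ₃. -/
def pauli3 : Matrix (Fin 2) (Fin 2) ℂ := !![1, 0; 0, -1]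

/-- The projective qubit measurement element
`A = (1/2)(1₂ + (−1)^a (n₁σ₁ + n₂σ₂ + n₃σ₃))`. -/
noncomputable def projElem (a : Fin 2) (n : Fin 3 → ℝ) : Matrix (Fin 2) (Fin 2) ℂ :=
  (1 / 2 : ℂ) • ((1 : Matrix (Fin 2) (Fin 2) ℂ) +
    ((-1 : ℂ) ^ (a : ℕ)) • ((n 0 : ℂ) • pauli1 + (n 1 : ℂ) • pauli2 + (n 2 : ℂ) • pauli3))

/-!
The reduced state of `|ψ^γ⟩` is `diag (cos² γ, sin² γ)`, with Bloch vector `cos 2γ · e₃`, so a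
measurement element with Bloch vector `±n` has marginal `(1 ± n₃ cos 2γ) / 2`. Thus
`(1 - 2p)² = n₃² cos² 2γ ≤ cos² 2γ = 1 - sin² 2γ`.
-/

theorem star_vec_diagonal_dotProduct_kronecker_one_mulVec {ι R : Type*} [Fintype ι]
    [DecidableEq ι] [Semiring R] [StarAddMonoid R] (d : ι → R) (A : Matrix ι ι R) :
    star (vec (diagonal d)) ⬝ᵥ ((A ⊗ₖ (1 : Matrix ι ι R)) *ᵥ vec (diagonal d)) =
      ∑ i, star (d i) * (A i i * d i) := by
  rw [← star_dotProduct_hadamard_mulVec_eq_kronecker, hadamard_one]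
  simp [dotProduct, mulVec_diagonal]

theorem schmidtVec_eq_vec_diagonal (γ : ℝ) :
    schmidtVec γ = vec (diagonal ![(Real.cos γ : ℂ), (Real.sin γ : ℂ)]) := by
  ext ⟨i, j⟩
  fin_cases i <;> fin_cases j <;> simp [schmidtVec]

theorem projElem_zero_zero (a : Fin 2) (n : Fin 3 → ℝ) :
    projElem a n 0 0 = (1 + (-1) ^ (a : ℕ) * n 2) / 2 := by
  simp [projElem, pauli1, pauli2, pauli3, div_eq_inv_mul]

theorem projElem_one_one (a : Fin 2) (n : Fin 3 → ℝ) :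
    projElem a n 1 1 = (1 - (-1) ^ (a : ℕ) * n 2) / 2 := by
  simp [projElem, pauli1, pauli2, pauli3, div_eq_inv_mul, sub_eq_add_neg]

theorem schmidtVec_marginal_projElem (γ : ℝ) (a : Fin 2) (n : Fin 3 → ℝ) :
    star (schmidtVec γ) ⬝ᵥ
        ((projElem a n ⊗ₖ (1 : Matrix (Fin 2) (Fin 2) ℂ)) *ᵥ schmidtVec γ) =
      (((1 + (-1) ^ (a : ℕ) * (n 2 * Real.cos (2 * γ))) / 2 : ℝ) : ℂ) := by
  rw [schmidtVec_eq_vec_diagonal, star_vec_diagonal_dotProduct_kronecker_one_mulVec,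
    Fin.sum_univ_two, projElem_zero_zero, projElem_one_one, Real.cos_two_mul']
  have trig : (Real.cos γ : ℂ) ^ 2 + (Real.sin γ : ℂ) ^ 2 = 1 := by
    exact_mod_cast Real.cos_sq_add_sin_sq γ
  simp only [cons_val_zero, cons_val_one, RCLike.star_def, Complex.conj_ofReal]
  push_cast [-Complex.ofReal_cos, -Complex.ofReal_sin]
  linear_combination trig / 2

theorem abs_sin_le_sqrt_one_sub_mul_cos_sq {t : ℝ} (ht : t ^ 2 ≤ 1) (θ : ℝ) :
    |Real.sin θ| ≤ √(1 - (t * Real.cos θ) ^ 2) := by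
  apply Real.abs_le_sqrt
  calc Real.sin θ ^ 2 = 1 - Real.cos θ ^ 2 := Real.sin_sq θ
    _ ≤ 1 - (t * Real.cos θ) ^ 2 := by
      rw [mul_pow]
      gcongr
      exact mul_le_of_le_one_left (sq_nonneg _) ht

/-- For arbitrary real `γ` the concurrence of `|ψ^γ⟩` is `|sin 2γ|`, and the matrices `projElem a n`
with `n` in the closed unit ball are the positive semidefinite ones. -/
theorem concurrence_le_of_projective_marginal_general
    (γ : ℝ) (a : Fin 2) (n : Fin 3 → ℝ) (hn : n 0 ^ 2 + n 1 ^ 2 + n 2 ^ 2 ≤ 1) (p : ℝ)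
    (hp : (star (schmidtVec γ) ⬝ᵥ
        ((projElem a n ⊗ₖ (1 : Matrix (Fin 2) (Fin 2) ℂ)) *ᵥ schmidtVec γ)) = (p : ℂ)) :
    |Real.sin (2 * γ)| ≤ √(1 - (1 - 2 * p) ^ 2) := by
  have marginal : (1 + (-1) ^ (a : ℕ) * (n 2 * Real.cos (2 * γ))) / 2 = p :=
    Complex.ofReal_injective ((schmidtVec_marginal_projElem γ a n).symm.trans hp)
  have deviation : (1 - 2 * p) ^ 2 = (n 2 * Real.cos (2 * γ)) ^ 2 := by
    calc (1 - 2 * p) ^ 2 = ((-1) ^ (a : ℕ) * (n 2 * Real.cos (2 * γ))) ^ 2 := by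
          rw [← marginal]
          ring
      _ = (n 2 * Real.cos (2 * γ)) ^ 2 := by
          rw [mul_pow, pow_right_comm, neg_one_sq, one_pow, one_mul]
  have bloch : n 2 ^ 2 ≤ 1 := by linarith [sq_nonneg (n 0), sq_nonneg (n 1)]
  rw [deviation]
  exact abs_sin_le_sqrt_one_sub_mul_cos_sq bloch (2 * γ)

/-- the concurrence `sin 2γ` of `|ψ^γ⟩` is bounded from above by the
marginal probability `p` of any projective measurement element:
`sin 2γ ≤ √(1 − (1 − 2p)²)`. -/
theorem concurrence_le_of_projective_marginal
    (γ : ℝ) (hγ₀ : 0 ≤ γ) (hγ₁ : γ ≤ Real.pi / 4)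
    (a : Fin 2) (n : Fin 3 → ℝ) (hn : n 0 ^ 2 + n 1 ^ 2 + n 2 ^ 2 = 1)
    (p : ℝ)
    (hp : (star (schmidtVec γ) ⬝ᵥ
        ((projElem a n ⊗ₖ (1 : Matrix (Fin 2) (Fin 2) ℂ)) *ᵥ schmidtVec γ)) = (p : ℂ)) :
    Real.sin (2 * γ) ≤ Real.sqrt (1 - (1 - 2 * p) ^ 2) :=
  (le_abs_self _).trans (concurrence_le_of_projective_marginal_general γ a n hn.le p hp)
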